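/- arXiv:1906.03062 — 2 statements merged into one kernel-verified Lean document; each statement's English description precedes it below -/
import Mathlib

section
/- Let n ≥ 2, k ≥ 2, N > 0, and let {(β_i,θ_i)}_{i=1}^{k+1} be a 1/N-quadrature rule exact for Λ_{n,k}, with nodes -1 ≤ β_1 < ⋯ < β_{k+1} < 1 and weights θ_i > 0, and write (as the exactness guarantees) a_{k+1}·q_{k+1}(t) = P_{k+1}^{1,0}(t) + c_1 P_k^{1,0}(t) + c_2 P_{k-1}^{1,0}(t) + c_3 P_{k-2}^{1,0}(t), where a_j denotes the leading coefficient of P_j^{1,0}. Set r_{k-2} = (∫ (P_{k-2}^{1,0})² dν_n)^{-1} and d_0 = θ_{k+1}·(1-β_{k+1})·q_k(β_{k+1}). Assume P_j^{1,0}(β_{k+1}) > 0 for every j ≤ k-1, and that c_3 > - d_0 · a_{k+1} · a_{k-2} · r_{k-2} · P_{k-1}^{1,0}(β_{k+1}) / a_{k-1} (in particular this holds when c_3 ≥ 0). Then all coefficients d_j in the expansion q_k = ∑_{j=0}^k d_j P_j^{1,0} are positive. -/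
open MeasureTheory Finset
open scoped Classical

/-- The (unnormalized) Gegenbauer weight `(1 - t²)^((n-3)/2)`. -/
noncomputable def gegWeight (n : ℕ) (t : ℝ) : ℝ := (1 - t ^ 2) ^ (((n : ℝ) - 3) / 2)

/-- Integration against the probability measure `μ_n` on `[-1,1]` with density
proportional to `(1 - t²)^((n-3)/2)`. -/
noncomputable def gegInt (n : ℕ) (f : ℝ → ℝ) : ℝ :=
  (∫ t in Set.Icc (-1 : ℝ) 1, gegWeight n t)⁻¹ *
    ∫ t in Set.Icc (-1 : ℝ) 1, f t * gegWeight n t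

/-- `P : ℕ → ℝ[X]` is the family of Gegenbauer polynomials for dimension `n`:
`deg P_i = i`, `P_i(1) = 1`, pairwise orthogonal in `L²(μ_n)`. -/
def IsGegenbauer (n : ℕ) (P : ℕ → Polynomial ℝ) : Prop :=
  (∀ i, (P i).natDegree = i) ∧ (∀ i, (P i).eval 1 = 1) ∧
    ∀ i j, i ≠ j → gegInt n (fun t => (P i).eval t * (P j).eval t) = 0

/-- A `1/N`-quadrature rule with nodes `α` and weights `ρ`, exact for a set `Λ`
of functions on `[-1,1]`. -/
def IsQuadratureRule (n : ℕ) (N : ℝ) {k : ℕ} (α ρ : Fin k → ℝ)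
    (Λ : Set (ℝ → ℝ)) : Prop :=
  (∀ i, -1 ≤ α i) ∧ (∀ i, α i < 1) ∧ StrictMono α ∧ (∀ i, 0 < ρ i) ∧
    ∀ f ∈ Λ, gegInt n f = f 1 / N + ∑ i, ρ i * f (α i)

/-- Integration against the probability measure `ν_n` on `[-1,1]` with density
proportional to `(1-t)(1 - t²)^((n-3)/2)`. -/
noncomputable def adjInt (n : ℕ) (f : ℝ → ℝ) : ℝ :=
  (∫ t in Set.Icc (-1 : ℝ) 1, (1 - t) * gegWeight n t)⁻¹ *
    ∫ t in Set.Icc (-1 : ℝ) 1, f t * ((1 - t) * gegWeight n t)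

/-- `Q : ℕ → ℝ[X]` is the family of adjacent polynomials `P_i^{1,0}` for dimension `n`:
`deg Q_i = i`, `Q_i(1) = 1`, pairwise orthogonal in `L²(ν_n)`. -/
def IsAdjacent (n : ℕ) (Q : ℕ → Polynomial ℝ) : Prop :=
  (∀ i, (Q i).natDegree = i) ∧ (∀ i, (Q i).eval 1 = 1) ∧
    ∀ i j, i ≠ j → adjInt n (fun t => (Q i).eval t * (Q j).eval t) = 0

/-- Membership of a polynomial in `Λ_{n,k} = 𝒫_{2k-1} ⊕ span{P_{2k+2}, P_{2k+3}}`: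
degree at most `2k+3` and orthogonality to `P_{2k}` and `P_{2k+1}` in `L²(μ_n)`. -/
def InLambda (n k : ℕ) (P : ℕ → Polynomial ℝ) (p : Polynomial ℝ) : Prop :=
  p.natDegree ≤ 2 * k + 3 ∧
    gegInt n (fun t => p.eval t * (P (2 * k)).eval t) = 0 ∧
    gegInt n (fun t => p.eval t * (P (2 * k + 1)).eval t) = 0

/-- The space `Λ_{n,k}`, as a set of functions on `ℝ`. -/
def LambdaSpace (n k : ℕ) (P : ℕ → Polynomial ℝ) : Set (ℝ → ℝ) :=
  {f | ∃ p : Polynomial ℝ, InLambda n k P p ∧ f = fun t => p.eval t}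

/-!
Write `b` for the last node and `L` for integration against `ν_n`. Since `L f` is the `μ_n`-integral
of `(1 - t) f`, the rule becomes a positive rule for `ν_n`, exact up to degree `2k - 2` and without
a node at `1`. As `q_k` vanishes at all nodes but `b`, this gives `L (q_k f) = d_0 f(b)` for
`deg f ≤ k - 2`; taking `f = P_j^{1,0}` shows `d_j > 0` for `j ≤ k - 2`. The coefficient `d_k` is
`1 / a_k`. For `d_{k-1}`, the polynomial `(t - b) P_{k-2}^{1,0} - (a_{k-2} / a_{k-1}) P_{k-1}^{1,0}`
has degree at most `k - 2`, so `L (q_k P_{k-1}^{1,0})` can be read off from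
`a_{k+1} L (q_{k+1} P_{k-2}^{1,0}) = c_3 / r_{k-2}`.
-/

section OrthogonalSequence

open Polynomial Lagrange

section Field

variable {K : Type*} [Field K] {L : K[X] →ₗ[K] K} {Q : Sequence K}

lemma map_mul_eq_zero_of_degree_lt (hQ : Pairwise fun i j => L (Q i * Q j) = 0) {j : ℕ} {f : K[X]}
    (hf : f.degree < j) : L (Q j * f) = 0 := by
  have hle : degreeLT K j ≤ LinearMap.ker (L ∘ₗ LinearMap.mulLeft K (Q j)) := by
    rw [← Q.span_degreeLT fun i _ => (leadingCoeff_ne_zero.mpr (Q.ne_zero i)).isUnit,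
      Submodule.span_le]
    rintro _ ⟨i, hi, rfl⟩
    exact hQ (ne_of_gt hi)
  exact hle (mem_degreeLT.mpr hf)

lemma map_sum_C_mul_mul (hQ : Pairwise fun i j => L (Q i * Q j) = 0) (d : ℕ → K) {n j : ℕ}
    (hj : j < n) : L ((∑ i ∈ range n, C (d i) * Q i) * Q j) = d j * L (Q j ^ 2) := by
  simp only [sum_mul, map_sum, ← smul_eq_C_mul, smul_mul_assoc, map_smul, smul_eq_mul]
  rw [sum_eq_single_of_mem j (mem_range.mpr hj) fun i _ hij => by rw [hQ hij, mul_zero], sq]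

variable (Q) in
lemma coeff_sum_range_succ_C_mul (d : ℕ → K) (k : ℕ) :
    (∑ j ∈ range (k + 1), C (d j) * Q j).coeff k = d k * (Q k).leadingCoeff := by
  have hlow : ∀ j ∈ range k, (C (d j) * Q j).coeff k = 0 := fun j hj => by
    rw [coeff_C_mul, coeff_eq_zero_of_natDegree_lt (by simpa using hj), mul_zero]
  rw [sum_range_succ, coeff_add, finsetSum_coeff, sum_eq_zero hlow, zero_add, coeff_C_mul,
    leadingCoeff, Q.natDegree_eq]

variable (Q) in
lemma natDegree_X_sub_C_mul_sub_le (b : K) (m : ℕ) :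
    ((X - C b) * Q m -
      C ((Q m).leadingCoeff / (Q (m + 1)).leadingCoeff) * Q (m + 1)).natDegree ≤ m := by
  have hne (i : ℕ) : (Q i).leadingCoeff ≠ 0 := leadingCoeff_ne_zero.mpr (Q.ne_zero i)
  have hdeg : ((X - C b) * Q m).degree = ↑(m + 1) := by
    rw [degree_mul, degree_X_sub_C, Q.degree_eq, Nat.cast_succ, add_comm]
  have hlt := degree_sub_lt_left (p := (X - C b) * Q m)
    (q := C ((Q m).leadingCoeff / (Q (m + 1)).leadingCoeff) * Q (m + 1))
    (by rw [hdeg, degree_C_mul (div_ne_zero (hne _) (hne _)), Q.degree_eq])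
    (mul_ne_zero (X_sub_C_ne_zero b) (Q.ne_zero m))
    (by simp [div_mul_cancel₀ _ (hne (m + 1))])
  rw [hdeg, degree_lt_iff_coeff_zero] at hlt
  exact natDegree_le_iff_coeff_eq_zero.mpr hlt

lemma map_X_sub_C_mul_mul {q : K[X]} {b D : K} {m : ℕ}
    (hq : ∀ f : K[X], f.natDegree ≤ m → L (q * f) = D * f.eval b) :
    L ((X - C b) * q * Q m) = (Q m).leadingCoeff / (Q (m + 1)).leadingCoeff *
      (L (q * Q (m + 1)) - D * (Q (m + 1)).eval b) := by
  set r := (Q m).leadingCoeff / (Q (m + 1)).leadingCoeff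
  have hsplit : (X - C b) * q * Q m =
      q * ((X - C b) * Q m - C r * Q (m + 1)) + r • (q * Q (m + 1)) := by
    rw [smul_eq_C_mul]
    ring
  rw [hsplit, map_add, hq _ (natDegree_X_sub_C_mul_sub_le Q b m), map_smul, smul_eq_mul]
  simp only [eval_sub, eval_mul, eval_X, eval_C]
  ring

lemma map_nodal_erase_mul {ι : Type*} [Fintype ι] [DecidableEq ι] {β w : ι → K} {e : ℕ}
    (hexact : ∀ f : K[X], f.natDegree ≤ e → L f = ∑ i, w i * f.eval (β i)) (i₀ : ι) {f : K[X]}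
    (hf : Fintype.card ι - 1 + f.natDegree ≤ e) :
    L (nodal (univ.erase i₀) β * f) =
      w i₀ * (∏ i ∈ univ.erase i₀, (β i₀ - β i)) * f.eval (β i₀) := by
  have hdeg : (nodal (univ.erase i₀) β * f).natDegree ≤ e := by
    refine natDegree_mul_le.trans ?_
    rwa [natDegree_nodal, card_erase_of_mem (mem_univ i₀), card_univ]
  have hvanish : ∀ i ≠ i₀, w i * (nodal (univ.erase i₀) β * f).eval (β i) = 0 := fun i hi => by
    rw [eval_mul, eval_nodal_at_node (mem_erase.mpr ⟨hi, mem_univ i⟩), zero_mul, mul_zero]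
  rw [hexact _ hdeg, Fintype.sum_eq_single i₀ hvanish, eval_mul, eval_nodal, mul_assoc]

end Field

section OrderedField

variable {K : Type*} [Field K] [LinearOrder K] [IsStrictOrderedRing K] {L : K[X] →ₗ[K] K}
  {Q : Sequence K}

lemma lt_of_isRoot_of_orthogonal (hQ : Pairwise fun i j => L (Q i * Q j) = 0) {b : K}
    (hL : ∀ p : K[X], p ≠ 0 → (∀ t ≤ b, 0 ≤ p.eval t) → 0 < L p) {j : ℕ} {x : K}
    (hx : (Q j).IsRoot x) : x < b := by
  by_contra! hbx
  obtain ⟨g, hg⟩ := dvd_iff_isRoot.mpr hx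
  have hg0 : g ≠ 0 := right_ne_zero_of_mul (hg ▸ Q.ne_zero j)
  have horth : L (Q j * g) = 0 := by
    refine map_mul_eq_zero_of_degree_lt hQ ?_
    rw [← Q.degree_eq j, hg, mul_comm, degree_mul, degree_X_sub_C, degree_eq_natDegree hg0]
    exact_mod_cast Nat.lt_succ_self g.natDegree
  have hpos : 0 < L (-(Q j * g)) := by
    refine hL _ (neg_ne_zero.mpr (mul_ne_zero (Q.ne_zero j) hg0)) fun t ht => ?_
    have hnonneg : 0 ≤ (x - t) * g.eval t ^ 2 :=
      mul_nonneg (sub_nonneg.mpr (ht.trans hbx)) (sq_nonneg _)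
    simp only [hg, eval_neg, eval_mul, eval_sub, eval_X, eval_C]
    linarith
  simp [horth] at hpos

lemma map_mul_succ_pos (hQ : Pairwise fun i j => L (Q i * Q j) = 0)
    (hlc : ∀ j, 0 < (Q j).leadingCoeff) {m : ℕ} (hsq : 0 < L (Q m ^ 2)) {q : K[X]} {b D : K}
    (hq : ∀ f : K[X], f.natDegree ≤ m → L (q * f) = D * f.eval b) (c₁ c₂ : K) {c₃ : K}
    (hexp : C (Q (m + 3)).leadingCoeff * ((X - C b) * q) =
      Q (m + 3) + C c₁ * Q (m + 2) + C c₂ * Q (m + 1) + C c₃ * Q m)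
    (hc₃ : -(D * (Q (m + 3)).leadingCoeff * (Q m).leadingCoeff * (L (Q m ^ 2))⁻¹ *
      (Q (m + 1)).eval b) / (Q (m + 1)).leadingCoeff < c₃) :
    0 < L (q * Q (m + 1)) := by
  have hpair : (Q (m + 3)).leadingCoeff * ((Q m).leadingCoeff / (Q (m + 1)).leadingCoeff *
      (L (q * Q (m + 1)) - D * (Q (m + 1)).eval b)) = c₃ * L (Q m ^ 2) := by
    rw [← map_X_sub_C_mul_mul hq, ← smul_eq_mul, ← map_smul, ← smul_mul_assoc, smul_eq_C_mul, hexp]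
    simp only [add_mul, ← smul_eq_C_mul, smul_mul_assoc, map_add, map_smul,
      hQ (show m + 3 ≠ m by omega), hQ (show m + 2 ≠ m by omega), hQ (show m + 1 ≠ m by omega),
      smul_eq_mul, mul_zero, zero_add, sq]
  have ha₀ := hlc m
  have ha₁ := hlc (m + 1)
  have ha₃ := hlc (m + 3)
  generalize (Q m).leadingCoeff = a₀, (Q (m + 1)).leadingCoeff = a₁,
    (Q (m + 3)).leadingCoeff = a₃, L (Q m ^ 2) = S, (Q (m + 1)).eval b = y at *
  have hsolve : L (q * Q (m + 1)) = D * y + c₃ * (S * a₁ / (a₃ * a₀)) := by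
    field_simp at hpair ⊢
    linear_combination hpair
  have hlower : -(D * y) < c₃ * (S * a₁ / (a₃ * a₀)) :=
    calc -(D * y) = -(D * a₃ * a₀ * S⁻¹ * y) / a₁ * (S * a₁ / (a₃ * a₀)) := by field_simp
      _ < c₃ * (S * a₁ / (a₃ * a₀)) := mul_lt_mul_of_pos_right hc₃ (by positivity)
  linarith

/-- Here `b` is the node `β i₀`, the prefix `q_k` is the nodal polynomial of the other nodes, and
`m` is `k - 2`. -/
theorem stmt_11_general (hQ : Pairwise fun i j => L (Q i * Q j) = 0)
    (hlc : ∀ j, 0 < (Q j).leadingCoeff) (hsq : ∀ j, 0 < L (Q j ^ 2))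
    {ι : Type*} [Fintype ι] [DecidableEq ι] {m : ℕ} (hcard : Fintype.card ι = m + 3)
    {β w : ι → K} {i₀ : ι} (hβ : ∀ i ≠ i₀, β i < β i₀) (hw : 0 < w i₀)
    (hexact : ∀ f : K[X], f.natDegree ≤ 2 * m + 2 → L f = ∑ i, w i * f.eval (β i))
    {c₁ c₂ c₃ : K}
    (hexp : C (Q (m + 3)).leadingCoeff * nodal univ β =
      Q (m + 3) + C c₁ * Q (m + 2) + C c₂ * Q (m + 1) + C c₃ * Q m)
    (hβpos : ∀ j ≤ m + 1, 0 < (Q j).eval (β i₀))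
    (hc₃ : -(w i₀ * (∏ i ∈ univ.erase i₀, (β i₀ - β i)) * (Q (m + 3)).leadingCoeff *
      (Q m).leadingCoeff * (L (Q m ^ 2))⁻¹ * (Q (m + 1)).eval (β i₀)) /
        (Q (m + 1)).leadingCoeff < c₃)
    {d : ℕ → K} (hd : nodal (univ.erase i₀) β = ∑ j ∈ range (m + 3), C (d j) * Q j) :
    ∀ j ≤ m + 2, 0 < d j := by
  have hD : 0 < w i₀ * ∏ i ∈ univ.erase i₀, (β i₀ - β i) :=
    mul_pos hw (prod_pos fun i hi => sub_pos.mpr (hβ i (ne_of_mem_erase hi)))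
  have hq : ∀ f : K[X], f.natDegree ≤ m → L (nodal (univ.erase i₀) β * f) =
      w i₀ * (∏ i ∈ univ.erase i₀, (β i₀ - β i)) * f.eval (β i₀) :=
    fun f hf => map_nodal_erase_mul hexact i₀ (by omega)
  have hd_pos : ∀ j ≤ m + 2, 0 < L (nodal (univ.erase i₀) β * Q j) → 0 < d j := fun j hj h => by
    rw [hd, map_sum_C_mul_mul hQ d (by omega)] at h
    exact pos_of_mul_pos_left h (hsq j).le
  intro j hj
  obtain hjm | rfl | rfl : j ≤ m ∨ j = m + 1 ∨ j = m + 2 := by omega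
  · refine hd_pos j hj ?_
    rw [hq _ (by rwa [Q.natDegree_eq])]
    exact mul_pos hD (hβpos j (by omega))
  · refine hd_pos (m + 1) hj (map_mul_succ_pos hQ hlc (hsq m) hq c₁ c₂ ?_ hc₃)
    rwa [← nodal_eq_mul_nodal_erase (mem_univ i₀)]
  · have hdeg : (nodal (univ.erase i₀) β).natDegree = m + 2 := by
      rw [natDegree_nodal, card_erase_of_mem (mem_univ i₀), card_univ, hcard]
      rfl
    have htop : d (m + 2) * (Q (m + 2)).leadingCoeff = 1 := by
      rw [← coeff_sum_range_succ_C_mul, ← hd, ← hdeg]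
      exact nodal_monic
    exact pos_of_mul_pos_left (htop ▸ one_pos) (hlc (m + 2)).le

end OrderedField

lemma leadingCoeff_pos_of_orthogonal {L : ℝ[X] →ₗ[ℝ] ℝ} {Q : Sequence ℝ}
    (hQ : Pairwise fun i j => L (Q i * Q j) = 0) {b : ℝ}
    (hL : ∀ p : ℝ[X], p ≠ 0 → (∀ t ≤ b, 0 ≤ p.eval t) → 0 < L p) {j : ℕ}
    (hb : 0 < (Q j).eval b) : 0 < (Q j).leadingCoeff := by
  by_contra! hlc
  exact hb.not_gt (eval_lt_zero_of_roots_lt_of_leadingCoeff_nonpos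
    (fun _ hx => lt_of_isRoot_of_orthogonal hQ hL hx) hlc)

end OrthogonalSequence

section WeightFunctional

open Polynomial

variable {a b : ℝ} {w : ℝ → ℝ}

lemma integrableOn_eval_mul (hw : IntegrableOn w (Set.Icc a b)) (p : ℝ[X]) :
    IntegrableOn (fun t => p.eval t * w t) (Set.Icc a b) :=
  hw.continuousOn_mul p.continuous.continuousOn isCompact_Icc

/-- The linear functional on polynomials given by integration over `[a, b]` against the weight `w`,
normalized to take the value `1` at the constant `1`. -/
noncomputable def weightFunctional (hw : IntegrableOn w (Set.Icc a b)) : ℝ[X] →ₗ[ℝ] ℝ where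
  toFun p := (∫ t in Set.Icc a b, w t)⁻¹ * ∫ t in Set.Icc a b, p.eval t * w t
  map_add' p q := by
    simp only [eval_add, add_mul]
    rw [integral_add (integrableOn_eval_mul hw p) (integrableOn_eval_mul hw q), mul_add]
  map_smul' c p := by
    simp only [eval_smul, smul_eq_mul, mul_assoc, integral_const_mul, RingHom.id_apply]
    ring

lemma setIntegral_eval_mul_pos (hab : a < b) (hw : IntegrableOn w (Set.Icc a b))
    (hpos : ∀ t ∈ Set.Ioo a b, 0 < w t) {p : ℝ[X]} (hp : p ≠ 0)
    (hp_nonneg : ∀ t ∈ Set.Ioo a b, 0 ≤ p.eval t) : 0 < ∫ t in Set.Icc a b, p.eval t * w t := by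
  rw [integral_Icc_eq_integral_Ioo, setIntegral_pos_iff_support_of_nonneg_ae
    (ae_restrict_of_forall_mem measurableSet_Ioo fun t ht =>
      mul_nonneg (hp_nonneg t ht) (hpos t ht).le)
    ((integrableOn_eval_mul hw p).mono_set Set.Ioo_subset_Icc_self)]
  have hsub : Set.Ioo a b \ (p.roots.toFinset : Set ℝ) ⊆
      Function.support (fun t => p.eval t * w t) ∩ Set.Ioo a b := fun t ⟨ht, hroot⟩ =>
    ⟨mul_ne_zero (by simpa [hp] using hroot) (hpos t ht).ne', ht⟩
  refine lt_of_lt_of_le ?_ (measure_mono hsub)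
  rw [measure_sdiff_null ((Finset.finite_toSet _).measure_zero _)]
  simpa using hab

lemma weightFunctional_pos (hab : a < b) (hw : IntegrableOn w (Set.Icc a b))
    (hpos : ∀ t ∈ Set.Ioo a b, 0 < w t) {p : ℝ[X]} (hp : p ≠ 0)
    (hp_nonneg : ∀ t ∈ Set.Ioo a b, 0 ≤ p.eval t) : 0 < weightFunctional hw p := by
  have hmass := setIntegral_eval_mul_pos hab hw hpos one_ne_zero (by simp)
  simp only [eval_one, one_mul] at hmass
  exact mul_pos (inv_pos.mpr hmass) (setIntegral_eval_mul_pos hab hw hpos hp hp_nonneg)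

end WeightFunctional

section Gegenbauer

open Polynomial

lemma intervalIntegrable_one_sub_sq_rpow {s : ℝ} (hs : -1 < s) :
    IntervalIntegrable (fun t : ℝ => (1 - t ^ 2) ^ s) volume (-1) 1 := by
  have hright : IntervalIntegrable (fun t : ℝ => (1 - t ^ 2) ^ s) volume 0 1 := by
    have hsing : IntervalIntegrable (fun t : ℝ => (1 - t) ^ s) volume 0 1 := by
      simpa using
        ((intervalIntegral.intervalIntegrable_rpow' (a := 0) (b := 1) hs).comp_sub_left 1).symm
    have hreg : ContinuousOn (fun t : ℝ => (1 + t) ^ s) (Set.uIcc 0 1) := by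
      rw [Set.uIcc_of_le zero_le_one]
      exact (by fun_prop : ContinuousOn (fun t : ℝ => 1 + t) _).rpow_const
        fun t ht => Or.inl (by linarith [ht.1])
    refine (hsing.mul_continuousOn hreg).congr fun t ht => ?_
    rw [Set.uIoc_of_le zero_le_one] at ht
    change (1 - t) ^ s * (1 + t) ^ s = (1 - t ^ 2) ^ s
    rw [← Real.mul_rpow (by linarith [ht.2]) (by linarith [ht.1])]
    ring_nf
  have hleft : IntervalIntegrable (fun t : ℝ => (1 - t ^ 2) ^ s) volume (-1) 0 := by
    rw [IntervalIntegrable.iff_comp_neg]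
    simpa using hright.symm
  exact hleft.trans hright

variable {n : ℕ}

lemma integrableOn_gegWeight (hn : 2 ≤ n) : IntegrableOn (gegWeight n) (Set.Icc (-1) 1) := by
  have hs : -1 < ((n : ℝ) - 3) / 2 := by
    have : (2 : ℝ) ≤ n := mod_cast hn
    linarith
  rw [integrableOn_Icc_iff_integrableOn_Ioc,
    ← intervalIntegrable_iff_integrableOn_Ioc_of_le (by norm_num)]
  exact intervalIntegrable_one_sub_sq_rpow hs

lemma gegWeight_pos {t : ℝ} (ht : t ∈ Set.Ioo (-1) 1) : 0 < gegWeight n t :=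
  Real.rpow_pos_of_pos (by nlinarith [ht.1, ht.2]) _

lemma setIntegral_Icc_neg_eq_zero_of_odd {f : ℝ → ℝ} (hf : f.Odd) {a : ℝ} (ha : 0 ≤ a) :
    ∫ t in Set.Icc (-a) a, f t = 0 := by
  rw [integral_Icc_eq_integral_Ioc, ← intervalIntegral.integral_of_le (by linarith)]
  have hneg := intervalIntegral.integral_comp_neg f (a := -a) (b := a)
  simp only [hf _, intervalIntegral.integral_neg, neg_neg] at hneg
  linarith

lemma setIntegral_one_sub_mul_gegWeight (hn : 2 ≤ n) :
    ∫ t in Set.Icc (-1 : ℝ) 1, (1 - t) * gegWeight n t =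
      ∫ t in Set.Icc (-1 : ℝ) 1, gegWeight n t := by
  have hodd : (fun t => t * gegWeight n t).Odd := fun t => by simp [gegWeight]
  have hint : IntegrableOn (fun t => t * gegWeight n t) (Set.Icc (-1) 1) := by
    simpa using integrableOn_eval_mul (integrableOn_gegWeight hn) X
  simp only [sub_mul, one_mul]
  rw [integral_sub (integrableOn_gegWeight hn) hint,
    setIntegral_Icc_neg_eq_zero_of_odd hodd zero_le_one, sub_zero]

lemma adjInt_eq_gegInt (hn : 2 ≤ n) (f : ℝ → ℝ) :
    adjInt n f = gegInt n fun t => (1 - t) * f t := by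
  simp only [adjInt, gegInt, setIntegral_one_sub_mul_gegWeight hn, mul_left_comm (f _), mul_assoc]

lemma integrableOn_one_sub_mul_gegWeight (hn : 2 ≤ n) :
    IntegrableOn (fun t => (1 - t) * gegWeight n t) (Set.Icc (-1) 1) :=
  (integrableOn_gegWeight hn).continuousOn_mul (by fun_prop) isCompact_Icc

/-- `gegInt n` as a linear functional on polynomials. -/
noncomputable abbrev gegFunctional (hn : 2 ≤ n) : ℝ[X] →ₗ[ℝ] ℝ :=
  weightFunctional (integrableOn_gegWeight hn)

/-- `adjInt n` as a linear functional on polynomials. -/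
noncomputable abbrev adjFunctional (hn : 2 ≤ n) : ℝ[X] →ₗ[ℝ] ℝ :=
  weightFunctional (integrableOn_one_sub_mul_gegWeight hn)

lemma gegFunctional_apply (hn : 2 ≤ n) (p : ℝ[X]) :
    gegFunctional hn p = gegInt n fun t => p.eval t := rfl

lemma adjFunctional_apply (hn : 2 ≤ n) (p : ℝ[X]) :
    adjFunctional hn p = adjInt n fun t => p.eval t := rfl

lemma adjFunctional_pos (hn : 2 ≤ n) {p : ℝ[X]} (hp : p ≠ 0)
    (hp_nonneg : ∀ t ≤ 1, 0 ≤ p.eval t) : 0 < adjFunctional hn p :=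
  weightFunctional_pos (by norm_num) _
    (fun _ ht => mul_pos (sub_pos.mpr ht.2) (gegWeight_pos ht)) hp fun t ht => hp_nonneg t ht.2.le

/-- A family with `natDegree (Q i) = i` and `Q i (1) = 1`, bundled as a polynomial sequence. -/
def sequenceOfEvalOne (Q : ℕ → ℝ[X]) (hdeg : ∀ i, (Q i).natDegree = i)
    (heval : ∀ i, (Q i).eval 1 = 1) : Sequence ℝ where
  elems' := Q
  degree_eq' i := by
    have hne : Q i ≠ 0 := fun h => by simpa [h] using heval i
    rw [degree_eq_natDegree hne, hdeg]

/-- The Gegenbauer polynomials, bundled as a polynomial sequence. -/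
def IsGegenbauer.sequence {P : ℕ → ℝ[X]} (hP : IsGegenbauer n P) : Sequence ℝ :=
  sequenceOfEvalOne P hP.1 hP.2.1

/-- The adjacent polynomials, bundled as a polynomial sequence. -/
def IsAdjacent.sequence {Q : ℕ → ℝ[X]} (hQ : IsAdjacent n Q) : Sequence ℝ :=
  sequenceOfEvalOne Q hQ.1 hQ.2.1

lemma IsGegenbauer.pairwise_orthogonal {P : ℕ → ℝ[X]} (hP : IsGegenbauer n P) (hn : 2 ≤ n) :
    Pairwise fun i j => gegFunctional hn (hP.sequence i * hP.sequence j) = 0 := fun i j hij => by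
  simp only [gegFunctional_apply, eval_mul]
  exact hP.2.2 i j hij

lemma IsAdjacent.pairwise_orthogonal {Q : ℕ → ℝ[X]} (hQ : IsAdjacent n Q) (hn : 2 ≤ n) :
    Pairwise fun i j => adjFunctional hn (hQ.sequence i * hQ.sequence j) = 0 := fun i j hij => by
  simp only [adjFunctional_apply, eval_mul]
  exact hQ.2.2 i j hij

lemma IsAdjacent.leadingCoeff_pos {Q : ℕ → ℝ[X]} (hQ : IsAdjacent n Q) (hn : 2 ≤ n) (j : ℕ) :
    0 < (hQ.sequence j).leadingCoeff :=
  leadingCoeff_pos_of_orthogonal (hQ.pairwise_orthogonal hn)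
    (fun _ => adjFunctional_pos hn) (zero_lt_one.trans_eq (hQ.2.1 j).symm)

lemma adjFunctional_sq_pos (hn : 2 ≤ n) {p : ℝ[X]} (hp : p ≠ 0) : 0 < adjFunctional hn (p ^ 2) :=
  adjFunctional_pos hn (pow_ne_zero 2 hp) fun t _ => by
    rw [eval_pow]
    exact sq_nonneg _

lemma IsGegenbauer.eval_mem_LambdaSpace {P : ℕ → ℝ[X]} (hP : IsGegenbauer n P) (hn : 2 ≤ n)
    {k : ℕ} {p : ℝ[X]} (hp : p.natDegree < 2 * k) : (fun t => p.eval t) ∈ LambdaSpace n k P := by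
  have horth : ∀ j, 2 * k ≤ j → gegInt n (fun t => p.eval t * (P j).eval t) = 0 := fun j hj => by
    have hdeg : p.degree < j := degree_le_natDegree.trans_lt (by exact_mod_cast hp.trans_le hj)
    have hzero := map_mul_eq_zero_of_degree_lt (hP.pairwise_orthogonal hn) hdeg
    rw [mul_comm, gegFunctional_apply] at hzero
    simp only [eval_mul] at hzero
    exact hzero
  exact ⟨p, ⟨by omega, horth _ le_rfl, horth _ (by omega)⟩, rfl⟩

lemma IsQuadratureRule.adjFunctional_eq_sum {N : ℝ} {l k : ℕ} {α ρ : Fin l → ℝ} {P : ℕ → ℝ[X]}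
    (hquad : IsQuadratureRule n N α ρ (LambdaSpace n k P)) (hP : IsGegenbauer n P) (hn : 2 ≤ n)
    {f : ℝ[X]} (hf : f.natDegree + 1 < 2 * k) :
    adjFunctional hn f = ∑ i, ρ i * (1 - α i) * f.eval (α i) := by
  have hdeg : ((1 - X) * f).natDegree < 2 * k := by
    refine natDegree_mul_le.trans_lt ?_
    have : (1 - X : ℝ[X]).natDegree ≤ 1 := by compute_degree
    omega
  have hexact := hquad.2.2.2.2 _ (hP.eval_mem_LambdaSpace hn hdeg)
  simp only [eval_mul, eval_sub, eval_one, eval_X, sub_self, zero_mul, zero_div, zero_add,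
    ← mul_assoc] at hexact
  rw [adjFunctional_apply, adjInt_eq_gegInt hn, hexact]

end Gegenbauer

lemma filter_val_lt_eq_erase_last (k : ℕ) :
    univ.filter (fun i : Fin (k + 1) => (i : ℕ) < k) = univ.erase (Fin.last k) := by
  ext i
  simp [← Fin.lt_last_iff_ne_last, Fin.lt_def]

/-- positivity of the coefficients of the partial product `q_k` in the
adjacent basis. -/
theorem stmt_11 (n : ℕ) (hn : 2 ≤ n) (k : ℕ) (hk : 2 ≤ k) (N : ℝ) (hN : 0 < N)
    (P : ℕ → Polynomial ℝ) (hP : IsGegenbauer n P)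
    (Q : ℕ → Polynomial ℝ) (hQadj : IsAdjacent n Q)
    (β θ : Fin (k + 1) → ℝ)
    (hquad : IsQuadratureRule n N β θ (LambdaSpace n k P))
    (c₁ c₂ c₃ : ℝ)
    (hexp : Polynomial.C (Q (k + 1)).leadingCoeff *
        (∏ i, (Polynomial.X - Polynomial.C (β i))) =
      Q (k + 1) + Polynomial.C c₁ * Q k + Polynomial.C c₂ * Q (k - 1) +
        Polynomial.C c₃ * Q (k - 2))
    (hβpos : ∀ j ≤ k - 1, 0 < (Q j).eval (β (Fin.last k)))
    (hc₃ : c₃ >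
      -(θ (Fin.last k) * (1 - β (Fin.last k)) *
          (∏ i ∈ Finset.univ.filter (fun i : Fin (k + 1) => (i : ℕ) < k),
            (β (Fin.last k) - β i)) *
          (Q (k + 1)).leadingCoeff * (Q (k - 2)).leadingCoeff *
          (adjInt n (fun t => ((Q (k - 2)).eval t) ^ 2))⁻¹ *
          (Q (k - 1)).eval (β (Fin.last k))) /
        (Q (k - 1)).leadingCoeff)
    (d : ℕ → ℝ)
    (hd : (∏ i ∈ Finset.univ.filter (fun i : Fin (k + 1) => (i : ℕ) < k),
        (Polynomial.X - Polynomial.C (β i))) =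
      ∑ j ∈ Finset.range (k + 1), Polynomial.C (d j) * Q j) :
    ∀ j ≤ k, 0 < d j := by
  obtain ⟨m, rfl⟩ := Nat.exists_eq_add_of_le' hk
  rw [filter_val_lt_eq_erase_last] at hd hc₃
  have ⟨_, hβ_lt_one, hβ_mono, hθ, _⟩ := hquad
  have hw : 0 < θ (Fin.last (m + 2)) * (1 - β (Fin.last (m + 2))) :=
    mul_pos (hθ _) (sub_pos.mpr (hβ_lt_one _))
  simp only [← Polynomial.eval_pow] at hc₃
  exact stmt_11_general (L := adjFunctional hn) (Q := hQadj.sequence) (β := β)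
    (i₀ := Fin.last (m + 2)) (w := fun i => θ i * (1 - β i))
    (hQadj.pairwise_orthogonal hn) (hQadj.leadingCoeff_pos hn)
    (fun j => adjFunctional_sq_pos hn (hQadj.sequence.ne_zero j)) (Fintype.card_fin _)
    (fun i hi => hβ_mono (Fin.lt_last_iff_ne_last.mpr hi)) hw
    (fun f hf => hquad.adjFunctional_eq_sum hP hn (by omega)) hexp hβpos hc₃ hd
end

section
/- Let n ≥ 2, k ≥ 2, N > 0, and let {(β_i,θ_i)}_{i=1}^{k+1} be a 1/N-quadrature rule exact for Λ_{n,k}, with nodes -1 ≤ β_1 < ⋯ < β_{k+1} < 1 and weights θ_i > 0. Then for every integer j with 2 ≤ j ≤ k, the signed measure with density ∏_{i=k-j+2}^{k+1}(β_i - t) · (1-t) with respect to μ_n is positive definite up to degree k-j: for every real polynomial p, not identically zero, of degree at most k-j, ∫_{-1}^1 p(t)² · ∏_{i=k-j+2}^{k+1}(β_i - t) · (1-t) dμ_n(t) > 0. -/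
open MeasureTheory Finset
open scoped Classical

/-!
The polynomial `p² ∏_{i ≥ k - j + 2} (β_i - t) (1 - t)` has degree at most
`2(k - j) + j + 1 ≤ 2k - 1`, so it is orthogonal to `P_{2k}` and `P_{2k+1}` and the quadrature rule
integrates it exactly. The factor `1 - t` kills the term at `t = 1` and the product kills the `j`
largest nodes. At each of the `k - j + 1` remaining nodes the coefficient of `p²` is positive, and
`p`, having degree at most `k - j`, cannot vanish at all of them.
-/

theorem integrableOn_one_sub_sq_rpow {s : ℝ} (hs : -1 < s) :
    IntegrableOn (fun t : ℝ => (1 - t ^ 2) ^ s) (Set.Icc (-1) 1) := by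
  have right_half : IntervalIntegrable (fun t : ℝ => (1 - t ^ 2) ^ s) volume 0 1 := by
    have singular : IntervalIntegrable (fun t : ℝ => (1 - t) ^ s) volume 0 1 := by
      simpa using
        ((intervalIntegral.intervalIntegrable_rpow' (a := 0) (b := 1) hs).comp_sub_left 1).symm
    have regular : ContinuousOn (fun t : ℝ => (1 + t) ^ s) (Set.uIcc 0 1) := by
      refine ContinuousOn.rpow_const (by fun_prop) fun t ht => Or.inl ?_
      rw [Set.uIcc_of_le zero_le_one] at ht
      linarith [ht.1]
    refine (singular.mul_continuousOn regular).congr fun t ht => ?_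
    rw [Set.uIoc_of_le zero_le_one] at ht
    change (1 - t) ^ s * (1 + t) ^ s = (1 - t ^ 2) ^ s
    rw [← Real.mul_rpow (by linarith [ht.2]) (by linarith [ht.1])]
    ring_nf
  have left_half : IntervalIntegrable (fun t : ℝ => (1 - t ^ 2) ^ s) volume (-1) 0 := by
    simpa using (right_half.comp_sub_left 0).symm
  rw [← intervalIntegrable_iff_integrableOn_Icc_of_le (by norm_num)]
  exact left_half.trans right_half

theorem natDegree_sq_mul_prod_C_sub_X_mul_one_sub_X_le {R ι : Type*} [CommRing R]
    (p : Polynomial R) (S : Finset ι) (x : ι → R) :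
    (p ^ 2 * (∏ i ∈ S, (Polynomial.C (x i) - Polynomial.X)) * (1 - Polynomial.X)).natDegree ≤
      2 * p.natDegree + S.card + 1 := by
  have natDegree_prod : (∏ i ∈ S, (Polynomial.C (x i) - Polynomial.X)).natDegree ≤ S.card := by
    refine (Polynomial.natDegree_prod_le S _).trans ?_
    rw [← mul_one S.card]
    exact Finset.sum_le_card_nsmul S _ 1 fun i _ => by compute_degree
  exact Polynomial.natDegree_mul_le_of_le
    (Polynomial.natDegree_mul_le_of_le Polynomial.natDegree_pow_le natDegree_prod)
    (by compute_degree)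

theorem sum_mul_eval_sq_pos {R ι : Type*} [CommRing R] [LinearOrder R] [IsStrictOrderedRing R]
    {s : Finset ι} {x w : ι → R} (hx : Set.InjOn x s) (hw : ∀ i ∈ s, 0 < w i)
    {p : Polynomial R} (hp : p ≠ 0) (hdeg : p.natDegree < s.card) :
    0 < ∑ i ∈ s, w i * p.eval (x i) ^ 2 := by
  obtain ⟨i, hi, hpi⟩ : ∃ i ∈ s, p.eval (x i) ≠ 0 := by
    by_contra! hvanish
    refine hp (Polynomial.eq_zero_of_natDegree_lt_card_of_eval_eq_zero' p (s.image x) ?_ ?_)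
    · simpa only [Finset.forall_mem_image] using hvanish
    · rwa [Finset.card_image_of_injOn hx]
  exact Finset.sum_pos' (fun l hl => mul_nonneg (hw l hl).le (sq_nonneg _))
    ⟨i, hi, mul_pos (hw i hi) (sq_pos_of_ne_zero hpi)⟩

theorem integrableOn_mul_gegWeight {n : ℕ} (hn : 2 ≤ n) {f : ℝ → ℝ}
    (hf : ContinuousOn f (Set.Icc (-1) 1)) :
    IntegrableOn (fun t => f t * gegWeight n t) (Set.Icc (-1) 1) := by
  have hn' : (2 : ℝ) ≤ n := by exact_mod_cast hn
  have hw : IntegrableOn (gegWeight n) (Set.Icc (-1) 1) :=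
    integrableOn_one_sub_sq_rpow (by linarith)
  exact hw.continuousOn_mul hf isCompact_Icc

theorem gegInt_add {n : ℕ} {f g : ℝ → ℝ}
    (hf : IntegrableOn (fun t => f t * gegWeight n t) (Set.Icc (-1) 1))
    (hg : IntegrableOn (fun t => g t * gegWeight n t) (Set.Icc (-1) 1)) :
    gegInt n (fun t => f t + g t) = gegInt n f + gegInt n g := by
  simp only [gegInt, add_mul, integral_add hf hg, mul_add]

theorem gegInt_const_mul (n : ℕ) (c : ℝ) (f : ℝ → ℝ) :
    gegInt n (fun t => c * f t) = c * gegInt n f := by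
  simp only [gegInt, mul_assoc, integral_const_mul]
  ring

namespace IsGegenbauer

variable {n : ℕ} {P : ℕ → Polynomial ℝ}

/-- A family of Gegenbauer polynomials as a polynomial sequence, which gives access to the fact
that its first `m` members span the polynomials of degree less than `m`. -/
def toSequence (hP : IsGegenbauer n P) : Polynomial.Sequence ℝ where
  elems' := P
  degree_eq' i := by
    have hne : P i ≠ 0 := fun h => by simpa [h] using hP.2.1 i
    rw [Polynomial.degree_eq_natDegree hne, hP.1]

theorem gegInt_eval_mul_eq_zero (hP : IsGegenbauer n P) (hn : 2 ≤ n) {m : ℕ} {p : Polynomial ℝ}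
    (hp : p.degree < m) : gegInt n (fun t => p.eval t * (P m).eval t) = 0 := by
  have hspan : p ∈ Submodule.span ℝ (hP.toSequence '' Set.Iio m) := by
    rw [hP.toSequence.span_degreeLT fun i _ =>
      (Polynomial.leadingCoeff_ne_zero.2 (hP.toSequence.ne_zero i)).isUnit]
    exact Polynomial.mem_degreeLT.2 hp
  have integrable (q : Polynomial ℝ) :
      IntegrableOn (fun t => q.eval t * (P m).eval t * gegWeight n t) (Set.Icc (-1) 1) :=
    integrableOn_mul_gegWeight hn (f := fun t => q.eval t * (P m).eval t) (by fun_prop)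
  clear hp
  induction hspan using Submodule.span_induction with
  | mem q hq =>
    obtain ⟨i, hi, rfl⟩ := hq
    exact hP.2.2 i m (ne_of_lt hi)
  | zero => simp [gegInt]
  | add q r _ _ hq hr =>
    simp only [Polynomial.eval_add, add_mul]
    rw [gegInt_add (integrable q) (integrable r), hq, hr, add_zero]
  | smul c q _ hq =>
    simp only [Polynomial.eval_smul, smul_eq_mul, mul_assoc]
    rw [gegInt_const_mul, hq, mul_zero]

theorem eval_mem_lambdaSpace (hP : IsGegenbauer n P) (hn : 2 ≤ n) {k : ℕ} {p : Polynomial ℝ}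
    (hp : p.natDegree < 2 * k) : (fun t => p.eval t) ∈ LambdaSpace n k P := by
  have degree_lt {m : ℕ} (hm : 2 * k ≤ m) : p.degree < m :=
    Polynomial.degree_le_natDegree.trans_lt (by exact_mod_cast hp.trans_le hm)
  exact ⟨p, ⟨by omega, hP.gegInt_eval_mul_eq_zero hn (degree_lt le_rfl),
    hP.gegInt_eval_mul_eq_zero hn (degree_lt (Nat.le_succ _))⟩, rfl⟩

end IsGegenbauer

theorem IsQuadratureRule.gegInt_sq_mul_prod_sub_mul_one_sub_pos {n k : ℕ} {N : ℝ}
    {α ρ : Fin k → ℝ} {Λ : Set (ℝ → ℝ)} (hquad : IsQuadratureRule n N α ρ Λ)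
    {S : Finset (Fin k)} (hS : IsUpperSet (S : Set (Fin k)))
    {p : Polynomial ℝ} (hp : p ≠ 0) (hdeg : p.natDegree < Sᶜ.card)
    (hmem : (fun t => p.eval t ^ 2 * (∏ i ∈ S, (α i - t)) * (1 - t)) ∈ Λ) :
    0 < gegInt n (fun t => p.eval t ^ 2 * (∏ i ∈ S, (α i - t)) * (1 - t)) := by
  obtain ⟨-, hlt, hmono, hρ, hexact⟩ := hquad
  have weight_pos : ∀ i ∈ Sᶜ, 0 < ρ i * (∏ l ∈ S, (α l - α i)) * (1 - α i) := fun i hi => by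
    have hprod : 0 < ∏ l ∈ S, (α l - α i) := Finset.prod_pos fun l hl =>
      sub_pos.2 (hmono (lt_of_not_ge fun hli => Finset.mem_compl.1 hi (hS hli hl)))
    exact mul_pos (mul_pos (hρ i) hprod) (sub_pos.2 (hlt i))
  have eq_sum : gegInt n (fun t => p.eval t ^ 2 * (∏ i ∈ S, (α i - t)) * (1 - t)) =
      ∑ i ∈ Sᶜ, ρ i * (∏ l ∈ S, (α l - α i)) * (1 - α i) * p.eval (α i) ^ 2 := by
    have terms_in_S : ∑ i ∈ S, ρ i * (p.eval (α i) ^ 2 * (∏ l ∈ S, (α l - α i)) * (1 - α i)) = 0 :=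
      Finset.sum_eq_zero fun i hi => by
        have hprod : ∏ l ∈ S, (α l - α i) = 0 := Finset.prod_eq_zero hi (sub_self _)
        rw [hprod, mul_zero, zero_mul, mul_zero]
    rw [hexact _ hmem, ← Finset.sum_compl_add_sum S, terms_in_S, sub_self, mul_zero, zero_div,
      zero_add, add_zero]
    exact Finset.sum_congr rfl fun i _ => by ring
  rw [eq_sum]
  exact sum_mul_eval_sq_pos hmono.injective.injOn weight_pos hp hdeg

/-- the signed measures `μ_j` are positive definite up to degree `k-j`. -/
theorem stmt_13 (n : ℕ) (hn : 2 ≤ n) (k : ℕ) (hk : 2 ≤ k) (N : ℝ) (hN : 0 < N)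
    (P : ℕ → Polynomial ℝ) (hP : IsGegenbauer n P)
    (β θ : Fin (k + 1) → ℝ)
    (hquad : IsQuadratureRule n N β θ (LambdaSpace n k P)) :
    ∀ j : ℕ, 2 ≤ j → j ≤ k →
      ∀ p : Polynomial ℝ, p ≠ 0 → p.natDegree ≤ k - j →
        0 < gegInt n (fun t => (p.eval t) ^ 2 *
          (∏ i ∈ Finset.univ.filter (fun i : Fin (k + 1) => k - j + 1 ≤ (i : ℕ)),
            (β i - t)) * (1 - t)) := by
  intro j hj2 hjk p hp hpdeg
  set S := Finset.univ.filter (fun i : Fin (k + 1) => k - j + 1 ≤ (i : ℕ)) with hS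
  have isUpperSet_S : IsUpperSet (S : Set (Fin (k + 1))) := fun a b hab ha => by
    simp only [hS, coe_filter_univ, Set.mem_ofPred_eq] at ha ⊢
    exact ha.trans hab
  have card_compl : Sᶜ.card = k - j + 1 := by
    rw [hS, Finset.compl_filter]
    simp only [not_le, Fin.card_filter_val_lt]
    omega
  have card_S : S.card = j := by
    have := Finset.card_add_card_compl S
    rw [card_compl, Fintype.card_fin] at this
    omega
  refine hquad.gegInt_sq_mul_prod_sub_mul_one_sub_pos isUpperSet_S hp (by omega) ?_
  have natDegree_le := natDegree_sq_mul_prod_C_sub_X_mul_one_sub_X_le p S β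
  simpa [Polynomial.eval_prod] using hP.eval_mem_lambdaSpace hn (k := k)
    (natDegree_le.trans_lt (by omega))
end
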